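/- Let k, n ∈ ℕ with n ≥ 1, let y, x₁, …, xₙ be variables, and let t be the nested level imax(imax(⋯imax(sᵏ(y), x₁)⋯, x_{n−1}), xₙ). Then for every valuation σ, ⟦t⟧σ = max over i = 1, …, n of ⟦A({x_{i+1}, …, xₙ}, xᵢ, 0)⟧σ (so in particular the i = n term is ⟦A(∅, xₙ, 0)⟧σ) together with ⟦A({x₁, …, xₙ}, y, k)⟧σ. Likewise, if t = imax(imax(⋯imax(sᵏ(0), x₁)⋯, x_{n−1}), xₙ), then for every valuation σ, ⟦t⟧σ = max over i = 1, …, n of ⟦A({x_{i+1}, …, xₙ}, xᵢ, 0)⟧σ together with ⟦B({x₁, …, xₙ}, k)⟧σ. -/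

import Mathlib

/-- The impredicative maximum on natural numbers. -/
def imaxN : ℕ → ℕ → ℕ
  | _, 0 => 0
  | i, (j+1) => max i (j+1)

/-- Levels: t ::= 0 | s(t) | x | max(t,t) | imax(t,t). -/
inductive Lvl where
  | zero : Lvl
  | succ : Lvl → Lvl
  | var : ℕ → Lvl
  | lmax : Lvl → Lvl → Lvl
  | limax : Lvl → Lvl → Lvl

/-- Value of a level under a valuation. -/
def evalL (σ : ℕ → ℕ) : Lvl → ℕ
  | .zero => 0
  | .succ t => evalL σ t + 1
  | .var x => σ x
  | .lmax u v => max (evalL σ u) (evalL σ v)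
  | .limax u v => imaxN (evalL σ u) (evalL σ v)

/-- Maximum of a list of naturals, 0 for the empty list. -/
def listMax (l : List ℕ) : ℕ := l.foldr max 0

/-- Sublevels A(E,x,S) and B(E,S). -/
inductive SubLvl where
  | A : Finset ℕ → ℕ → ℕ → SubLvl
  | B : Finset ℕ → ℕ → SubLvl
deriving DecidableEq

/-- Value of a sublevel under a valuation. -/
def evalS (σ : ℕ → ℕ) : SubLvl → ℕ
  | .A E x S => if ∃ y ∈ E, σ y = 0 then 0 else σ x + S
  | .B E S => if ∃ y ∈ E, σ y = 0 then 0 else S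

/-- Wellformed sublevels. -/
def Wf : SubLvl → Prop
  | .A E x _ => x ∈ E
  | .B _ S => 0 < S

/-- Semantic comparison of sublevels. -/
def leT (u v : SubLvl) : Prop := ∀ σ : ℕ → ℕ, evalS σ u ≤ evalS σ v

/-- Nested imax: `nest b [x₁,…,xₙ] = imax(imax(⋯imax(b, x₁)⋯, x_{n−1}), xₙ)`. -/
def nest (b : Lvl) (xs : List ℕ) : Lvl :=
  xs.foldl (fun a x => Lvl.limax a (.var x)) b

/-!
The value of `B(E, S)` is `S` guarded by the condition that no variable of `E` vanishes. Since
`imax(a, x)` is the maximum of `x` and of `a` guarded by `x`, and since guards distribute over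
maxima and accumulate, absorbing the innermost `imax` of a nest into its base contributes the
sublevel of `x₁` and adds `x₁` to the guard of the base. Induction on the list of variables, with
the base arbitrary, then gives both formulas, as `A(E, x, S)` is `B(E, σ(x) + S)` in value.
-/

theorem imaxN_eq_max_ite (i j : ℕ) : imaxN i j = max j (if j = 0 then 0 else i) := by
  cases j with
  | zero => rfl
  | succ j => rw [if_neg j.succ_ne_zero, max_comm, imaxN]

section

variable (σ : ℕ → ℕ)

theorem evalL_iterate_succ (k : ℕ) (t : Lvl) : evalL σ (Lvl.succ^[k] t) = evalL σ t + k := by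
  induction k with
  | zero => rfl
  | succ k ih => rw [Function.iterate_succ_apply', evalL, ih, add_assoc]

theorem evalS_A_eq_evalS_B (E : Finset ℕ) (x S : ℕ) :
    evalS σ (.A E x S) = evalS σ (.B E (σ x + S)) :=
  rfl

theorem evalS_B_empty (S : ℕ) : evalS σ (.B ∅ S) = S := by
  simp [evalS]

theorem evalS_B_max (E : Finset ℕ) (S T : ℕ) :
    evalS σ (.B E (max S T)) = max (evalS σ (.B E S)) (evalS σ (.B E T)) := by
  by_cases hE : ∃ y ∈ E, σ y = 0 <;> simp [evalS, hE]

theorem evalS_B_insert (E : Finset ℕ) (x S : ℕ) :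
    evalS σ (.B (insert x E) S) = evalS σ (.B E (if σ x = 0 then 0 else S)) := by
  by_cases hx : σ x = 0 <;> simp [evalS, hx]

theorem evalS_B_imaxN (E : Finset ℕ) (x S : ℕ) :
    evalS σ (.B E (imaxN S (σ x))) =
      max (evalS σ (.A E x 0)) (evalS σ (.B (insert x E) S)) := by
  rw [imaxN_eq_max_ite, evalS_B_max, evalS_B_insert, evalS_A_eq_evalS_B, add_zero]

/-- The maximum over `i = 1, …, n` of the values of `A({x_{i+1}, …, xₙ}, xᵢ, 0)`, for
`xs = [x₁, …, xₙ]`: the part of the value of `nest b xs` that does not depend on `b`. List positions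
are counted from `0`, and the default value of `getD` is never reached. -/
def maxSuffixSublevels (xs : List ℕ) : ℕ :=
  listMax ((List.range xs.length).map
    (fun i => evalS σ (.A (xs.drop (i + 1)).toFinset (xs.getD i 0) 0)))

theorem maxSuffixSublevels_cons (x : ℕ) (xs : List ℕ) :
    maxSuffixSublevels σ (x :: xs) =
      max (evalS σ (.A xs.toFinset x 0)) (maxSuffixSublevels σ xs) := by
  rw [maxSuffixSublevels, List.length_cons, List.range_succ_eq_map, List.map_cons, List.map_map]
  rfl

theorem evalL_nest (b : Lvl) (xs : List ℕ) :
    evalL σ (nest b xs) =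
      max (maxSuffixSublevels σ xs) (evalS σ (.B xs.toFinset (evalL σ b))) := by
  induction xs generalizing b with
  | nil => simp [nest, maxSuffixSublevels, listMax, evalS_B_empty]
  | cons x xs ih =>
    calc evalL σ (nest b (x :: xs))
        = evalL σ (nest (.limax b (.var x)) xs) := rfl
      _ = max (maxSuffixSublevels σ xs)
            (evalS σ (.B xs.toFinset (imaxN (evalL σ b) (σ x)))) := ih _
      _ = max (maxSuffixSublevels σ xs) (max (evalS σ (.A xs.toFinset x 0))
            (evalS σ (.B (insert x xs.toFinset) (evalL σ b)))) := by rw [evalS_B_imaxN]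
      _ = max (maxSuffixSublevels σ (x :: xs))
            (evalS σ (.B (x :: xs).toFinset (evalL σ b))) := by
        rw [maxSuffixSublevels_cons, List.toFinset_cons, max_left_comm, max_assoc]

end

theorem nested_imax_as_max_of_sublevels (k y : ℕ) (xs : List ℕ) (hxs : xs ≠ []) :
    (∀ σ : ℕ → ℕ,
      evalL σ (nest (Lvl.succ^[k] (Lvl.var y)) xs) =
        max (listMax ((List.range xs.length).map
              (fun i => evalS σ (SubLvl.A ((xs.drop (i+1)).toFinset) (xs.getD i 0) 0))))
            (evalS σ (SubLvl.A xs.toFinset y k))) ∧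
    (∀ σ : ℕ → ℕ,
      evalL σ (nest (Lvl.succ^[k] Lvl.zero) xs) =
        max (listMax ((List.range xs.length).map
              (fun i => evalS σ (SubLvl.A ((xs.drop (i+1)).toFinset) (xs.getD i 0) 0))))
            (evalS σ (SubLvl.B xs.toFinset k))) := by
  refine ⟨fun σ => ?_, fun σ => ?_⟩
  · rw [evalL_nest, evalL_iterate_succ, evalL, evalS_A_eq_evalS_B, maxSuffixSublevels]
  · rw [evalL_nest, evalL_iterate_succ, evalL, zero_add, maxSuffixSublevels]
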